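/- Monotonicity of derived period addition: for all valid dates D1 and D2 with D1 < D2, every period p = (py, pm, pd), and every rounding mode r ∈ {↓, ↑}, one has D1 +r p ≤ D2 +r p. -/

import Mathlib

/-- A value is either a date `(y, m, d)` (a triple of integers in the
Gregorian calendar) or the error element `⊥`. -/
inductive DValue : Type
  | date (y m d : ℤ) : DValue
  | bot : DValue
deriving DecidableEq

/-- `nb_days(y, m)`: the number of days of month `m` in year `y`
(meaningful for `1 ≤ m ≤ 12`). A year is leap iff it is divisible by 4
and not by 100, or divisible by 400. -/
def nbDays (y m : ℤ) : ℤ :=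
  if m = 2 then (if (4 ∣ y ∧ ¬ (100 ∣ y)) ∨ 400 ∣ y then 29 else 28)
  else if m = 4 ∨ m = 6 ∨ m = 9 ∨ m = 11 then 30
  else 31

theorem nbDays_bounds (y m : ℤ) : 28 ≤ nbDays y m ∧ nbDays y m ≤ 31 := by
  unfold nbDays; split_ifs <;> omega

/-- A date `(y, m, d)` is valid iff `1 ≤ m ≤ 12` and `1 ≤ d ≤ nb_days(y, m)`. -/
def ValidDate (y m d : ℤ) : Prop :=
  1 ≤ m ∧ m ≤ 12 ∧ 1 ≤ d ∧ d ≤ nbDays y m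

/-- Year addition: `(y,m,d) +y n = (y+n,m,d)`; `⊥ +y n = ⊥`. -/
def DValue.addY : DValue → ℤ → DValue
  | .date y m d, n => .date (y + n) m d
  | .bot, _ => .bot

/-- Month addition on a date `(y, m, d)` (with `⊥` for a month component
outside `[1,12]`):
`(y,m,d) +m n = (y,m+n,d)` if `1 ≤ m+n ≤ 12`,
`= (y+1,m,d) +m (n−12)` if `m+n > 12`, `= (y−1,m,d) +m (n+12)` if `m+n < 1`. -/
def addMonths (y m d n : ℤ) : DValue :=
  if _h : 1 ≤ m ∧ m ≤ 12 then
    if _h1 : 1 ≤ m + n ∧ m + n ≤ 12 then .date y (m + n) d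
    else if _h2 : 12 < m + n then addMonths (y + 1) m d (n - 12)
    else addMonths (y - 1) m d (n + 12)
  else .bot
termination_by (m + n - 12).toNat + (1 - (m + n)).toNat
decreasing_by all_goals omega

/-- Month addition on values: `⊥ +m n = ⊥`. -/
def DValue.addM : DValue → ℤ → DValue
  | .date y m d, n => addMonths y m d n
  | .bot, _ => .bot

/-- Day addition, following the rules:
for `(y,m,d)` with `1 ≤ d ≤ nb_days(y,m)`:
`(y,m,d) +d n = (y,m,d+n)` if `1 ≤ d+n ≤ nb_days(y,m)`;
`= ((y,m,1) +m 1) +d (n − (nb_days(y,m) − d) − 1)` if `d+n > nb_days(y,m)`;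
`= (y,m,1) +d (d−1+n)` if `d+n ≤ 0` and `d > 1`;
if `n+1 ≤ 0` then, letting `(y',m',d') = (y,m,1) +m (−1)`,
`(y,m,1) +d n = (y',m',1) +d (n + nb_days(y',m'))`.
If `d < 1` or `d > nb_days(y,m)` (or the month is out of range), the result is `⊥`. -/
def addDays (y m d n : ℤ) : DValue :=
  if _hm : 1 ≤ m ∧ m ≤ 12 then
    if _hd : 1 ≤ d ∧ d ≤ nbDays y m then
      if _h1 : 1 ≤ d + n ∧ d + n ≤ nbDays y m then .date y m (d + n)
      else if _h2 : nbDays y m < d + n then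
        match addMonths y m 1 1 with
        | .date y' m' _ => addDays y' m' 1 (n - (nbDays y m - d) - 1)
        | .bot => .bot
      else if _h3 : 1 < d then addDays y m 1 (d - 1 + n)
      else
        match _hprev : addMonths y m 1 (-1) with
        | .date y' m' _ => addDays y' m' 1 (n + nbDays y' m')
        | .bot => .bot
    else .bot
  else .bot
termination_by (if 0 ≤ n then n else 62 - n).toNat
decreasing_by
  · split_ifs <;> omega
  · split_ifs <;> omega
  · have h28 := nbDays_bounds y' m'
    split_ifs <;> omega

/-- Day addition on values: `⊥ +d n = ⊥`. -/
def DValue.addD : DValue → ℤ → DValue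
  | .date y m d, n => addDays y m d n
  | .bot, _ => .bot

/-- Rounding modes: down (`↓`), up (`↑`) and error (`⊥`). -/
inductive RMode : Type
  | down | up | err
deriving DecidableEq

/-- Rounding `rnd_r`: if `1 ≤ d ≤ nb_days(y,m)` then `rnd_r(y,m,d) = (y,m,d)`;
if `d > nb_days(y,m)` then `rnd_↓(y,m,d) = (y,m,nb_days(y,m))`,
`rnd_↑(y,m,d) = (y',m',1)` where `(y',m',d') = (y,m,d) +m 1`, and
`rnd_⊥(y,m,d) = ⊥`; if `d < 1` then `rnd_r(y,m,d) = ⊥`; `rnd_r(⊥) = ⊥`. -/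
def rnd (r : RMode) : DValue → DValue
  | .date y m d =>
    if 1 ≤ d ∧ d ≤ nbDays y m then .date y m d
    else if d < 1 then .bot
    else
      match r with
      | .down => .date y m (nbDays y m)
      | .up =>
        match addMonths y m d 1 with
        | .date y' m' _ => .date y' m' 1
        | .bot => .bot
      | .err => .bot
  | .bot => .bot

/-- A period `(py, pm, pd)`: a number of years, months and days. -/
structure Period : Type where
  py : ℤ
  pm : ℤ
  pd : ℤ
deriving DecidableEq

/-- Derived addition of a period with rounding mode `r`:
`e +r (py, pm, pd) = rnd_r((e +y py) +m pm) +d pd`. -/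
def addPeriod (r : RMode) (e : DValue) (p : Period) : DValue :=
  ((rnd r ((e.addY p.py).addM p.pm)).addD p.pd)

/-- Strict lexicographic order on dates. -/
def DateLt (y1 m1 d1 y2 m2 d2 : ℤ) : Prop :=
  y1 < y2 ∨ (y1 = y2 ∧ (m1 < m2 ∨ (m1 = m2 ∧ d1 < d2)))

/-- Large lexicographic order on dates. -/
def DateLe (y1 m1 d1 y2 m2 d2 : ℤ) : Prop :=
  y1 < y2 ∨ (y1 = y2 ∧ (m1 < m2 ∨ (m1 = m2 ∧ d1 ≤ d2)))

/-- Comparison lifted to values: it holds only between two dates. -/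
def DValue.lt : DValue → DValue → Prop
  | .date y1 m1 d1, .date y2 m2 d2 => DateLt y1 m1 d1 y2 m2 d2
  | _, _ => False

/-- Comparison lifted to values: it holds only between two dates. -/
def DValue.le : DValue → DValue → Prop
  | .date y1 m1 d1, .date y2 m2 d2 => DateLe y1 m1 d1 y2 m2 d2
  | _, _ => False

/-- A value is a valid date: it is not `⊥` and its components are valid. -/
def IsValidDate : DValue → Prop
  | .date y m d => ValidDate y m d
  | .bot => False

def yearOf : DValue → ℤ
  | .date y _ _ => y
  | .bot => 0

def monthOf : DValue → ℤ
  | .date _ m _ => m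
  | .bot => 0

def dayOf : DValue → ℤ
  | .date _ _ d => d
  | .bot => 0

/-- Date units: year, month, day. -/
inductive DUnit : Type
  | year | month | day
deriving DecidableEq

/-- Addition of `n` units to a value. -/
def addU : DUnit → DValue → ℤ → DValue
  | .year, v, n => v.addY n
  | .month, v, n => v.addM n
  | .day, v, n => v.addD n

/-- Componentwise addition of periods. -/
def Period.add (p q : Period) : Period :=
  ⟨p.py + q.py, p.pm + q.pm, p.pd + q.pd⟩

/-- Number of days before month `m` of year `y` (up to a constant). -/
def startS (y m : ℤ) : ℤ :=
  365 * y + (y - 1) / 4 - (y - 1) / 100 + (y - 1) / 400 +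
  (if m ≤ 1 then 0 else 31) + (if m ≤ 2 then 0 else nbDays y 2) + (if m ≤ 3 then 0 else 31) +
  (if m ≤ 4 then 0 else 30) + (if m ≤ 5 then 0 else 31) + (if m ≤ 6 then 0 else 30) +
  (if m ≤ 7 then 0 else 31) + (if m ≤ 8 then 0 else 31) + (if m ≤ 9 then 0 else 30) +
  (if m ≤ 10 then 0 else 31) + (if m ≤ 11 then 0 else 30)

theorem startS_succ (y m : ℤ) (h1 : 1 ≤ m) (h2 : m ≤ 11) :
    startS y (m + 1) = startS y m + nbDays y m := by
  interval_cases m <;> simp [startS, nbDays]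

theorem startS_year (y : ℤ) : startS (y + 1) 1 = startS y 12 + nbDays y 12 := by
  simp only [startS, nbDays]
  norm_num
  split_ifs <;> omega

theorem startS_next (y m y' m' : ℤ) (h1 : 1 ≤ m) (h2 : m ≤ 12) (h1' : 1 ≤ m') (h2' : m' ≤ 12)
    (h : 12 * y' + m' = 12 * y + m + 1) : startS y' m' = startS y m + nbDays y m := by
  by_cases hm : m = 12
  · have e1 : m' = 1 := by omega
    have e2 : y' = y + 1 := by omega
    subst hm e1 e2
    exact startS_year y
  · have e1 : m' = m + 1 := by omega
    have e2 : y' = y := by omega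
    subst e1 e2
    exact startS_succ _ m h1 (by omega)

theorem startS_mono_aux (y m : ℤ) (h1 : 1 ≤ m) (h2 : m ≤ 12) (j : ℕ) :
    ∀ y' m' : ℤ, 1 ≤ m' → m' ≤ 12 → 12 * y' + m' = 12 * y + m + 1 + j →
      startS y m + nbDays y m ≤ startS y' m' := by
  induction j with
  | zero =>
    intro y' m' a b c
    exact (startS_next y m y' m' h1 h2 a b (by simpa using c)).ge
  | succ j ih =>
    intro y' m' a b c
    push_cast at c
    by_cases hm : m' = 1
    · have e := startS_next (y' - 1) 12 y' m' (by norm_num) (by norm_num) a b (by omega)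
      have := ih (y' - 1) 12 (by norm_num) (by norm_num) (by omega)
      have := nbDays_bounds (y' - 1) 12
      omega
    · have e := startS_next y' (m' - 1) y' m' (by omega) (by omega) a b (by omega)
      have := ih y' (m' - 1) (by omega) (by omega) (by omega)
      have := nbDays_bounds y' (m' - 1)
      omega

theorem startS_mono (y m y' m' : ℤ) (h1 : 1 ≤ m) (h2 : m ≤ 12) (h1' : 1 ≤ m') (h2' : m' ≤ 12)
    (h : 12 * y + m < 12 * y' + m') : startS y m + nbDays y m ≤ startS y' m' :=
  startS_mono_aux y m h1 h2 (12 * y' + m' - (12 * y + m + 1)).toNat y' m' h1' h2' (by omega)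

theorem addMonths_spec (y m d n : ℤ) (h1 : 1 ≤ m) (h2 : m ≤ 12) :
    ∃ y' m', addMonths y m d n = .date y' m' d ∧ 1 ≤ m' ∧ m' ≤ 12 ∧
      12 * y' + m' = 12 * y + m + n := by
  induction y, n using addMonths.induct (m := m) with
  | case1 y n h h' =>
    rw [addMonths, dif_pos h, dif_pos h']
    exact ⟨_, _, rfl, h'.1, h'.2, by omega⟩
  | case2 y n h h' h'' ih =>
    rw [addMonths, dif_pos h, dif_neg h', dif_pos h'']
    obtain ⟨a, b, e, p, q, s⟩ := ih
    exact ⟨a, b, e, p, q, by omega⟩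
  | case3 y n h h' h'' ih =>
    rw [addMonths, dif_pos h, dif_neg h', dif_neg h'']
    obtain ⟨a, b, e, p, q, s⟩ := ih
    exact ⟨a, b, e, p, q, by omega⟩
  | case4 y n h => exact absurd ⟨h1, h2⟩ h

theorem addDays_spec (k : ℕ) : ∀ y m d n : ℤ, (if 0 ≤ n then n else 62 - n).toNat = k →
    ValidDate y m d →
    ∃ y' m' d', addDays y m d n = .date y' m' d' ∧ ValidDate y' m' d' ∧
      startS y' m' + d' = startS y m + d + n := by
  induction k using Nat.strong_induction_on with
  | _ k ih =>
  intro y m d n hk hv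
  obtain ⟨v1, v2, v3, v4⟩ := hv
  have hb := nbDays_bounds y m
  rw [addDays, dif_pos ⟨v1, v2⟩, dif_pos ⟨v3, v4⟩]
  by_cases c1 : 1 ≤ d + n ∧ d + n ≤ nbDays y m
  · rw [dif_pos c1]
    exact ⟨_, _, _, rfl, ⟨v1, v2, c1.1, c1.2⟩, by omega⟩
  rw [dif_neg c1]
  by_cases c2 : nbDays y m < d + n
  · rw [dif_pos c2]
    obtain ⟨a, b, e, p, q, s⟩ := addMonths_spec y m 1 1 v1 v2
    have hn := startS_next y m a b v1 v2 p q s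
    have hb' := nbDays_bounds a b
    rw [e]
    obtain ⟨y', m', d', e', w, t⟩ := ih _ (by subst hk; split_ifs <;> omega) a b 1
      (n - (nbDays y m - d) - 1) rfl ⟨p, q, le_rfl, by omega⟩
    exact ⟨y', m', d', e', w, by omega⟩
  rw [dif_neg c2]
  by_cases c3 : 1 < d
  · rw [dif_pos c3]
    obtain ⟨y', m', d', e', w, t⟩ := ih _ (by subst hk; split_ifs <;> omega) y m 1
      (d - 1 + n) rfl ⟨v1, v2, le_rfl, by omega⟩
    exact ⟨y', m', d', e', w, by omega⟩
  rw [dif_neg c3]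
  obtain ⟨a, b, e, p, q, s⟩ := addMonths_spec y m 1 (-1) v1 v2
  have hn := startS_next a b y m p q v1 v2 (by omega)
  have hb' := nbDays_bounds a b
  rw [e]
  obtain ⟨y', m', d', e', w, t⟩ := ih _ (by subst hk; split_ifs <;> omega) a b 1
    (n + nbDays a b) rfl ⟨p, q, le_rfl, by omega⟩
  exact ⟨y', m', d', e', w, by omega⟩

theorem rnd_spec (r : RMode) (hr : r = RMode.down ∨ r = RMode.up) :
    ∃ c : ℤ, 0 ≤ c ∧ c ≤ 1 ∧ ∀ y m d : ℤ, 1 ≤ m → m ≤ 12 → 1 ≤ d →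
      ∃ y' m' d', rnd r (.date y m d) = .date y' m' d' ∧ ValidDate y' m' d' ∧
        startS y' m' + d' = startS y m + min d (nbDays y m + c) := by
  rcases hr with rfl | rfl
  · refine ⟨0, le_rfl, by norm_num, fun y m d h1 h2 h3 => ?_⟩
    have hb := nbDays_bounds y m
    by_cases c1 : 1 ≤ d ∧ d ≤ nbDays y m
    · exact ⟨y, m, d, by simp [rnd, c1], ⟨h1, h2, c1.1, c1.2⟩, by omega⟩
    · refine ⟨y, m, nbDays y m, ?_, ⟨h1, h2, by omega, le_rfl⟩, by omega⟩
      simp only [rnd]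
      rw [if_neg c1, if_neg (by omega)]
  · refine ⟨1, by norm_num, le_rfl, fun y m d h1 h2 h3 => ?_⟩
    have hb := nbDays_bounds y m
    by_cases c1 : 1 ≤ d ∧ d ≤ nbDays y m
    · exact ⟨y, m, d, by simp [rnd, c1], ⟨h1, h2, c1.1, c1.2⟩, by omega⟩
    · obtain ⟨a, b, e, p, q, s⟩ := addMonths_spec y m d 1 h1 h2
      have hn := startS_next y m a b h1 h2 p q s
      have hb' := nbDays_bounds a b
      refine ⟨a, b, 1, ?_, ⟨p, q, le_rfl, by omega⟩, by omega⟩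
      simp only [rnd]
      rw [if_neg c1, if_neg (by omega), e]

theorem dateLe_of_ord (y m d y' m' d' : ℤ) (h : ValidDate y m d) (h' : ValidDate y' m' d')
    (ho : startS y m + d ≤ startS y' m' + d') : DateLe y m d y' m' d' := by
  obtain ⟨a1, a2, a3, a4⟩ := h
  obtain ⟨b1, b2, b3, b4⟩ := h'
  unfold DateLe
  rcases lt_trichotomy (12 * y + m) (12 * y' + m') with c | c | c
  · omega
  · have e1 : y = y' := by omega
    have e2 : m = m' := by omega
    subst e1 e2
    omega
  · have := startS_mono y' m' y m b1 b2 a1 a2 c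
    omega

/-- **Monotonicity of derived period addition**: for all valid dates `D1 < D2`
(in the lexicographic order), every period `p`, and every rounding mode
`r ∈ {↓, ↑}`, one has `D1 +r p ≤ D2 +r p`. -/
theorem monotonicity_addPeriod (y1 m1 d1 y2 m2 d2 : ℤ) (p : Period) (r : RMode)
    (hr : r = RMode.down ∨ r = RMode.up)
    (h1 : ValidDate y1 m1 d1) (h2 : ValidDate y2 m2 d2)
    (hlt : DateLt y1 m1 d1 y2 m2 d2) :
    DValue.le (addPeriod r (DValue.date y1 m1 d1) p)
      (addPeriod r (DValue.date y2 m2 d2) p) := by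
  obtain ⟨c, c0, c1, hc⟩ := rnd_spec r hr
  obtain ⟨a1, a2, a3, a4⟩ := h1
  obtain ⟨b1, b2, b3, b4⟩ := h2
  obtain ⟨ya, ma, ea, pa, qa, sa⟩ := addMonths_spec (y1 + p.py) m1 d1 p.pm a1 a2
  obtain ⟨yb, mb, eb, pb, qb, sb⟩ := addMonths_spec (y2 + p.py) m2 d2 p.pm b1 b2
  obtain ⟨yr, mr, dr, er, vr, tr⟩ := hc ya ma d1 pa qa a3
  obtain ⟨ys, ms, ds, es, vs, ts⟩ := hc yb mb d2 pb qb b3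
  obtain ⟨yt, mt, dt, et, vt, tt⟩ := addDays_spec _ yr mr dr p.pd rfl vr
  obtain ⟨yu, mu, du, eu, vu, tu⟩ := addDays_spec _ ys ms ds p.pd rfl vs
  simp only [addPeriod, DValue.addY, DValue.addM, ea, eb, er, es, DValue.addD, et, eu, DValue.le]
  apply dateLe_of_ord _ _ _ _ _ _ vt vu
  have hb := nbDays_bounds yb mb
  unfold DateLt at hlt
  rcases lt_or_ge (12 * ya + ma) (12 * yb + mb) with h | h
  · have := startS_mono ya ma yb mb pa qa pb qb h
    omega
  · have e1 : ya = yb := by omega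
    have e2 : ma = mb := by omega
    subst e1 e2
    omega
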